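/- arXiv:1509.07235 — 2 statements merged into one kernel-verified Lean document; each statement's English description precedes it below -/
import Mathlib

section
/- Given a short exact sequence 0 → A → W → C → 0 of R-modules with W L_n-injective: if A is L_n-injective then C is L_n-injective; and if the L_n-injective dimension of A is positive and finite, then L_n-id(C) = L_n-id(A) − 1. -/
open CategoryTheory

/-- Flatness of a module over an arbitrary (possibly noncommutative) ring,
via the equational criterion: every relation is a consequence of trivial relations. -/
def IsFlatMod (R : Type) [Ring R] (M : Type) [AddCommGroup M] [Module R M] : Prop :=
  ∀ (ι : Type) (_ : Fintype ι) (r : ι → R) (x : ι → M),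
    (∑ i, r i • x i = 0) →
      ∃ (κ : Type) (_ : Fintype κ) (a : ι → κ → R) (y : κ → M),
        (∀ i, x i = ∑ j, a i j • y j) ∧ ∀ j, (∑ i, r i * a i j) = 0

variable (R : Type) [Ring R]

/-- `Ext^n_R(M, N) = 0`. -/
def extVanish (n : ℕ) (M N : ModuleCat.{0} R) : Prop :=
  Subsingleton (((Ext ℤ (ModuleCat.{0} R) n).obj (Opposite.op M)).obj N)

/-- `M` has flat dimension at most `n`. -/
def fdLE : ℕ → ModuleCat.{0} R → Prop
  | 0, M => IsFlatMod R M
  | n+1, M => ∃ (K F : ModuleCat.{0} R) (f : K ⟶ F) (g : F ⟶ M),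
      IsFlatMod R F ∧ Function.Injective f ∧ Function.Surjective g ∧
        Function.Exact f g ∧ fdLE n K

/-- `W` is `L_n`-injective: `Ext^1_R(M, W) = 0` for every `M` of flat dimension at most `n`. -/
def LnInj (n : ℕ) (W : ModuleCat.{0} R) : Prop :=
  ∀ M : ModuleCat.{0} R, fdLE R n M → extVanish R 1 M W

/-- `N` has `L_n`-injective dimension at most `m`: there is an exact sequence
`0 → N → W_0 → ⋯ → W_m → 0` with all `W_i` `L_n`-injective. -/
def LnidLE (n : ℕ) : ℕ → ModuleCat.{0} R → Prop
  | 0, N => LnInj R n N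
  | m+1, N => ∃ (W C : ModuleCat.{0} R) (f : N ⟶ W) (g : W ⟶ C),
      LnInj R n W ∧ Function.Injective f ∧ Function.Surjective g ∧
        Function.Exact f g ∧ LnidLE n m C

/-- The `L_n`-injective dimension of `N`, as an extended natural number. -/
noncomputable def Lnid (n : ℕ) (N : ModuleCat.{0} R) : ℕ∞ :=
  sInf {k : ℕ∞ | ∃ m : ℕ, k = m ∧ LnidLE R n m N}

namespace IsFlatMod

variable {R}

/-- Over a flat module, finitely many simultaneous relations are consequences of trivial ones. -/
lemma exists_of_relations {M : Type} [AddCommGroup M] [Module R M] (hM : IsFlatMod R M)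
    {ι ρ : Type} [Fintype ι] [Finite ρ] (r : ρ → ι → R) (x : ι → M)
    (h : ∀ k, ∑ i, r k i • x i = 0) :
    ∃ (κ : Type) (_ : Fintype κ) (a : ι → κ → R) (y : κ → M),
      (∀ i, x i = ∑ j, a i j • y j) ∧ ∀ k j, ∑ i, r k i * a i j = 0 := by
  classical
  have := Fintype.ofFinite ρ
  suffices H : ∀ s : Finset ρ, ∃ (κ : Type) (_ : Fintype κ) (a : ι → κ → R) (y : κ → M),
      (∀ i, x i = ∑ j, a i j • y j) ∧ ∀ k ∈ s, ∀ j, ∑ i, r k i * a i j = 0 by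
    obtain ⟨κ, hκ, a, y, h₁, h₂⟩ := H Finset.univ
    exact ⟨κ, hκ, a, y, h₁, fun k => h₂ k (Finset.mem_univ k)⟩
  intro s
  induction s using Finset.induction_on with
  | empty => exact ⟨ι, inferInstance, fun i j => if i = j then 1 else 0, x, by simp, by simp⟩
  | insert k s _ ih =>
    obtain ⟨κ, _, a, y, hx, ha⟩ := ih
    have hk : ∑ j, (∑ i, r k i * a i j) • y j = 0 := by
      rw [← h k]
      simp_rw [hx, Finset.sum_smul, Finset.smul_sum, mul_smul]
      exact Finset.sum_comm
    obtain ⟨μ, hμ, b, z, hy, hb⟩ := hM κ inferInstance _ y hk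
    have key : ∀ k' l, ∑ i, r k' i * ∑ j, a i j * b j l
        = ∑ j, (∑ i, r k' i * a i j) * b j l := by
      intro k' l
      simp_rw [Finset.mul_sum, Finset.sum_mul, mul_assoc]
      exact Finset.sum_comm
    refine ⟨μ, hμ, fun i l => ∑ j, a i j * b j l, z, fun i => ?_, fun k' hk' l => ?_⟩
    · rw [hx i]
      simp_rw [hy, Finset.sum_smul, Finset.smul_sum, mul_smul]
      exact Finset.sum_comm
    · rw [key]
      rcases Finset.mem_insert.mp hk' with rfl | hk'
      · exact hb l
      · simp [ha k' hk']

lemma of_basis {α M : Type} [AddCommGroup M] [Module R M] (v : Module.Basis α R M) :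
    IsFlatMod R M := by
  classical
  intro ι _ r x h
  let S : Finset α := Finset.univ.biUnion fun i => (v.repr (x i)).support
  refine ⟨S, inferInstance, fun i s => v.repr (x i) s, fun s => v s, fun i => ?_, fun s => ?_⟩
  · have hS : (v.repr (x i)).support ⊆ S :=
      Finset.subset_biUnion_of_mem (fun i => (v.repr (x i)).support) (Finset.mem_univ i)
    conv_lhs => rw [← v.linearCombination_repr (x i), Finsupp.linearCombination_apply,
      Finsupp.sum_of_support_subset _ hS _ (by simp)]
    rw [← Finset.sum_coe_sort]
  · simpa [Finsupp.finsetSum_apply] using DFunLike.congr_fun (congrArg v.repr h) s.1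

/-- The kernel of an epimorphism between flat modules is flat. -/
lemma of_exact {K P F : Type} [AddCommGroup K] [AddCommGroup P] [AddCommGroup F]
    [Module R K] [Module R P] [Module R F] {f : K →ₗ[R] P} {g : P →ₗ[R] F}
    (hf : Function.Injective f) (hg : Function.Surjective g) (hfg : Function.Exact f g)
    (hP : IsFlatMod R P) (hF : IsFlatMod R F) : IsFlatMod R K := by
  intro ι _ r x h
  obtain ⟨κ, _, a, p, hx, ha⟩ := hP ι inferInstance r (fun i => f (x i)) (by
    simpa using congrArg f h)
  obtain ⟨μ, _, b, z, hz, hb⟩ := hF.exists_of_relations a (fun j => g (p j)) (fun i => by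
    simp_rw [← map_smul, ← map_sum, ← hx]
    exact hfg.apply_apply_eq_zero _)
  choose q hq using fun l => hg (z l)
  have hker : ∀ j, ∃ y, f y = p j - ∑ l, b j l • q l := fun j =>
    (hfg _).mp (by simp [hq, hz])
  choose y hy using hker
  refine ⟨κ, inferInstance, a, y, fun i => hf ?_, ha⟩
  have hzero : ∑ j, a i j • ∑ l, b j l • q l = 0 := by
    simp_rw [Finset.smul_sum, ← mul_smul]
    rw [Finset.sum_comm]
    simp_rw [← Finset.sum_smul, hb i, zero_smul, Finset.sum_const_zero]
  simp [hy, smul_sub, hzero, hx]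

lemma of_subsingleton (M : Type) [AddCommGroup M] [Module R M] [Subsingleton M] :
    IsFlatMod R M := fun _ _ _ _ _ =>
  ⟨Empty, inferInstance, fun _ => Empty.elim, Empty.elim, fun _ => Subsingleton.elim _ _,
    fun j => j.elim⟩

end IsFlatMod

section

variable {R}

lemma extVanish_one_iff (M N : ModuleCat.{0} R) :
    extVanish R 1 M N ↔ Subsingleton (Abelian.Ext.{0} M N 1) := by
  let P := projectiveResolution M
  have h₁ : extVanish R 1 M N ↔
      ∀ f : P.complex.X 1 ⟶ N, P.complex.d 2 1 ≫ f = 0 → ∃ g, P.complex.d 1 0 ≫ g = f := by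
    rw [extVanish, ← ModuleCat.isZero_iff_subsingleton, (P.isoExt 1 N).isZero_iff,
      ← HomologicalComplex.exactAt_iff_isZero_homology,
      HomologicalComplex.exactAt_iff' _ 0 1 2 (by simp) (by simp),
      ShortComplex.moduleCat_exact_iff]
    rfl
  rw [h₁]
  constructor
  · intro h
    refine subsingleton_of_forall_eq 0 fun α => ?_
    obtain ⟨f, hf, rfl⟩ := P.extMk_surjective α 2 rfl
    exact (P.extMk_eq_zero_iff f 2 rfl hf 0 rfl).mpr (h f hf)
  · intro h f hf
    exact (P.extMk_eq_zero_iff f 2 rfl hf 0 rfl).mp (Subsingleton.elim _ _)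

lemma fdLE_of_isFlatMod {M : ModuleCat.{0} R} (hM : IsFlatMod R M) (k : ℕ) : fdLE R k M := by
  cases k with
  | zero => exact hM
  | succ k =>
    have hzero : ∀ k, fdLE R k (ModuleCat.of R PUnit) := by
      intro k
      induction k with
      | zero => exact IsFlatMod.of_subsingleton PUnit
      | succ k ih =>
        exact ⟨_, ModuleCat.of R PUnit, 𝟙 _, 𝟙 _, IsFlatMod.of_subsingleton PUnit,
          fun _ _ _ => Subsingleton.elim _ _, fun x => ⟨x, Subsingleton.elim _ _⟩,
          fun x => ⟨fun _ => ⟨x, Subsingleton.elim _ _⟩, fun _ => Subsingleton.elim _ _⟩, ih⟩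
    refine ⟨_, M, 0, 𝟙 M, hM, fun _ _ _ => Subsingleton.elim _ _, fun x => ⟨x, rfl⟩,
      fun x => ⟨?_, ?_⟩, hzero k⟩
    · rintro rfl
      exact ⟨PUnit.unit, rfl⟩
    · rintro ⟨_, rfl⟩
      rfl

lemma fdLE_succ {k : ℕ} {M : ModuleCat.{0} R} (hM : fdLE R k M) : fdLE R (k + 1) M := by
  induction k generalizing M with
  | zero => exact fdLE_of_isFlatMod hM 1
  | succ k ih =>
    obtain ⟨K, F, f, g, hF, hf, hg, hfg, hK⟩ := hM
    exact ⟨K, F, f, g, hF, hf, hg, hfg, ih hK⟩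

lemma exists_shortExact {X Y Z : ModuleCat.{0} R} {f : X ⟶ Y} {g : Y ⟶ Z}
    (hf : Function.Injective f) (hg : Function.Surjective g) (hfg : Function.Exact f g) :
    ∃ w : f ≫ g = 0, (ShortComplex.mk f g w).ShortExact :=
  ⟨by ext x; exact hfg.apply_apply_eq_zero x, ModuleCat.shortComplex_shortExact _ hfg hf hg⟩

/-- `Ext^i(X₁, N) = 0` and `Ext^{i+1}(X₂, N) = 0` imply `Ext^{i+1}(X₃, N) = 0`. -/
lemma subsingleton_ext_X₃ {S : ShortComplex (ModuleCat.{0} R)} (hS : S.ShortExact)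
    {N : ModuleCat.{0} R} {i : ℕ} (h₁ : Subsingleton (Abelian.Ext.{0} S.X₁ N i))
    (h₂ : Subsingleton (Abelian.Ext.{0} S.X₂ N (i + 1))) :
    Subsingleton (Abelian.Ext.{0} S.X₃ N (i + 1)) := by
  refine subsingleton_of_forall_eq 0 fun x => ?_
  obtain ⟨y, rfl⟩ := Abelian.Ext.contravariant_sequence_exact₃ hS N x (Subsingleton.elim _ _)
    (add_comm 1 i)
  rw [Subsingleton.elim y 0, Abelian.Ext.comp_zero]

lemma subsingleton_ext_shift_iff {S : ShortComplex (ModuleCat.{0} R)} (hS : S.ShortExact)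
    {M : ModuleCat.{0} R} {i : ℕ} (h : Subsingleton (Abelian.Ext.{0} M S.X₂ i))
    (h' : Subsingleton (Abelian.Ext.{0} M S.X₂ (i + 1))) :
    Subsingleton (Abelian.Ext.{0} M S.X₁ (i + 1)) ↔ Subsingleton (Abelian.Ext.{0} M S.X₃ i) := by
  constructor <;> intro _ <;> refine subsingleton_of_forall_eq 0 fun x => ?_
  · obtain ⟨y, rfl⟩ := Abelian.Ext.covariant_sequence_exact₃ M hS x rfl (Subsingleton.elim _ _)
    rw [Subsingleton.elim y 0, Abelian.Ext.zero_comp]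
  · obtain ⟨y, rfl⟩ := Abelian.Ext.covariant_sequence_exact₁ M hS x (Subsingleton.elim _ _) rfl
    rw [Subsingleton.elim y 0, Abelian.Ext.zero_comp]

lemma LnInj.subsingleton_ext {n : ℕ} {W : ModuleCat.{0} R} (hW : LnInj R n W) (i : ℕ)
    {M : ModuleCat.{0} R} (hM : fdLE R n M) : Subsingleton (Abelian.Ext.{0} M W (i + 1)) := by
  induction i generalizing M with
  | zero => exact (extVanish_one_iff M W).mp (hW M hM)
  | succ i ih =>
    have flat : ∀ F : ModuleCat.{0} R, IsFlatMod R F →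
        Subsingleton (Abelian.Ext.{0} F W (i + 2)) := by
      intro F hF
      have hS := F.shortExact_projectiveShortComplex
      have hK : IsFlatMod R F.projectiveShortComplex.X₁ :=
        IsFlatMod.of_exact (f := F.projectiveShortComplex.f.hom)
          (g := F.projectiveShortComplex.g.hom) hS.moduleCat_injective_f
          hS.moduleCat_surjective_g
          ((ShortComplex.ShortExact.moduleCat_exact_iff_function_exact _).mp hS.exact)
          (IsFlatMod.of_basis (Module.Free.chooseBasis R _)) hF
      have : Projective F.projectiveShortComplex.X₂ :=
        ModuleCat.projective_of_free (Module.Free.chooseBasis R _)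
      exact subsingleton_ext_X₃ hS (ih (fdLE_of_isFlatMod hK n))
        (Abelian.Ext.subsingleton_of_projective _ _ _)
    cases n with
    | zero => exact flat M hM
    | succ n =>
      obtain ⟨K, F, f, g, hF, hf, hg, hfg, hK⟩ := hM
      obtain ⟨w, hS⟩ := exists_shortExact hf hg hfg
      exact subsingleton_ext_X₃ hS (ih (fdLE_succ hK)) (flat F hF)

lemma lnidLE_iff {n m : ℕ} {N : ModuleCat.{0} R} :
    LnidLE R n m N ↔
      ∀ M : ModuleCat.{0} R, fdLE R n M → Subsingleton (Abelian.Ext.{0} M N (m + 1)) := by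
  induction m generalizing N with
  | zero => exact forall₂_congr fun M _ => extVanish_one_iff M N
  | succ m ih =>
    constructor
    · rintro ⟨W, C, f, g, hW, hf, hg, hfg, hC⟩ M hM
      obtain ⟨w, hS⟩ := exists_shortExact hf hg hfg
      exact (subsingleton_ext_shift_iff hS (hW.subsingleton_ext m hM)
        (hW.subsingleton_ext (m + 1) hM)).mpr (ih.mp hC M hM)
    · intro h
      let ι := Injective.ι N
      let S := ShortComplex.mk ι (Limits.cokernel.π ι) (Limits.cokernel.condition ι)
      have hS : S.ShortExact :=
        { exact := ShortComplex.exact_cokernel ι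
          mono_f := inferInstanceAs (Mono ι)
          epi_g := inferInstanceAs (Epi (Limits.cokernel.π ι)) }
      refine ⟨_, _, S.f, S.g, fun M _ => (extVanish_one_iff _ _).mpr
        (Abelian.Ext.subsingleton_of_injective M (Injective.under N) 0),
        hS.moduleCat_injective_f, hS.moduleCat_surjective_g,
        (ShortComplex.ShortExact.moduleCat_exact_iff_function_exact _).mp hS.exact,
        ih.mpr fun M hM => (subsingleton_ext_shift_iff hS
          (Abelian.Ext.subsingleton_of_injective M (Injective.under N) m)
          (Abelian.Ext.subsingleton_of_injective M (Injective.under N) (m + 1))).mp (h M hM)⟩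

lemma LnInj.lnidLE {n m : ℕ} {N : ModuleCat.{0} R} (hN : LnInj R n N) : LnidLE R n m N :=
  lnidLE_iff.mpr fun _ hM => hN.subsingleton_ext m hM

lemma lnid_le_coe {n m : ℕ} {N : ModuleCat.{0} R} (h : LnidLE R n m N) : Lnid R n N ≤ m :=
  sInf_le ⟨m, rfl, h⟩

lemma exists_lnid_eq {n : ℕ} {N : ModuleCat.{0} R} (h : Lnid R n N ≠ ⊤) :
    ∃ m : ℕ, Lnid R n N = m ∧ LnidLE R n m N := by
  refine csInf_mem (s := {k : ℕ∞ | ∃ m : ℕ, k = m ∧ LnidLE R n m N}) ?_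
  by_contra hne
  rw [Set.not_nonempty_iff_eq_empty] at hne
  exact h (by rw [Lnid, hne, sInf_empty])

/-- A cosyzygy with `L_n`-injective middle term shifts the `L_n`-injective dimension by one. -/
lemma lnidLE_succ_iff {n m : ℕ} {A W C : ModuleCat.{0} R} {f : A ⟶ W} {g : W ⟶ C}
    (hf : Function.Injective f) (hg : Function.Surjective g) (hfg : Function.Exact f g)
    (hW : LnInj R n W) : LnidLE R n (m + 1) A ↔ LnidLE R n m C := by
  obtain ⟨w, hS⟩ := exists_shortExact hf hg hfg
  rw [lnidLE_iff, lnidLE_iff]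
  exact forall₂_congr fun M hM => subsingleton_ext_shift_iff hS (hW.subsingleton_ext m hM)
    (hW.subsingleton_ext (m + 1) hM)

end

/-- Given a short exact sequence `0 → A → W → C → 0` with `W` `L_n`-injective:
if `A` is `L_n`-injective then so is `C`; and if the `L_n`-injective dimension of `A`
is positive and finite, then `L_n`-id(C) = `L_n`-id(A) - 1. -/
theorem stmt16 (n : ℕ) (A W C : ModuleCat.{0} R) (f : A ⟶ W) (g : W ⟶ C)
    (hf : Function.Injective f) (hg : Function.Surjective g) (hfg : Function.Exact f g)
    (hW : LnInj R n W) :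
    (LnInj R n A → LnInj R n C) ∧
      (0 < Lnid R n A → Lnid R n A ≠ ⊤ → Lnid R n C = Lnid R n A - 1) := by
  refine ⟨fun hA => (lnidLE_succ_iff (m := 0) hf hg hfg hW).mp hA.lnidLE, fun hpos hfin => ?_⟩
  obtain ⟨k, hk, hA⟩ := exists_lnid_eq hfin
  rw [hk] at hpos ⊢
  obtain ⟨m, rfl⟩ : ∃ m, k = m + 1 := Nat.exists_eq_succ_of_ne_zero (by
    rintro rfl
    simp at hpos)
  have hC := lnid_le_coe ((lnidLE_succ_iff hf hg hfg hW).mp hA)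
  obtain ⟨l, hl, hCl⟩ := exists_lnid_eq (ne_top_of_le_ne_top (ENat.natCast_ne_top m) hC)
  have hle := lnid_le_coe ((lnidLE_succ_iff hf hg hfg hW).mpr hCl)
  rw [hl] at hC ⊢
  rw [hk] at hle
  norm_cast at hC hle ⊢
  omega
end

section
/- Every L_n-injective R-module is injective if and only if the weak global dimension of R is at most n. -/
open CategoryTheory

variable (R : Type) [Ring R]

section Flat

variable {R}

/-- The equational criterion for a finite system of linear relations. -/
lemma IsFlatMod.system {M : Type} [AddCommGroup M] [Module R M] (hM : IsFlatMod R M)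
    {τ : Type} (s : Finset τ) {ι : Type} [Fintype ι] (r : τ → ι → R) (x : ι → M)
    (h : ∀ t ∈ s, ∑ i, r t i • x i = 0) :
    ∃ (κ : Type) (_ : Fintype κ) (a : ι → κ → R) (y : κ → M),
      (∀ i, x i = ∑ j, a i j • y j) ∧ ∀ t ∈ s, ∀ j, ∑ i, r t i * a i j = 0 := by
  classical
  induction s using Finset.induction_on with
  | empty =>
    exact ⟨ι, inferInstance, fun i j => if i = j then 1 else 0, x, fun i => by simp, by simp⟩
  | insert t s _ ih =>
    obtain ⟨κ, _, a, y, hx, ha⟩ := ih fun t' ht' => h t' (Finset.mem_insert_of_mem ht')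
    have key : ∑ j, (∑ i, r t i * a i j) • y j = 0 := by
      rw [← h t (Finset.mem_insert_self t s)]
      simp_rw [hx, Finset.smul_sum, Finset.sum_smul, mul_smul]
      exact Finset.sum_comm
    obtain ⟨κ', _, b, z, hy, hb⟩ := hM κ inferInstance _ y key
    have hab : ∀ (c : ι → R) (k : κ'),
        ∑ i, c i * ∑ j, a i j * b j k = ∑ j, (∑ i, c i * a i j) * b j k := by
      intro c k
      simp_rw [Finset.mul_sum, Finset.sum_mul, mul_assoc]
      exact Finset.sum_comm
    refine ⟨κ', inferInstance, fun i k => ∑ j, a i j * b j k, z, fun i => ?_, fun t' ht' k => ?_⟩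
    · rw [hx i]
      simp_rw [hy, Finset.smul_sum, Finset.sum_smul, mul_smul]
      exact Finset.sum_comm
    · rw [hab]
      rcases Finset.mem_insert.1 ht' with rfl | ht'
      · exact hb k
      · simp [ha t' ht']

lemma IsFlatMod.of_projective (M : Type) [AddCommGroup M] [Module R M] [Module.Projective R M] :
    IsFlatMod R M := by
  classical
  obtain ⟨s, hs⟩ := Module.projective_def'.1 ‹Module.Projective R M›
  intro ι _ r x h
  let t : Finset M := Finset.univ.biUnion fun i => (s (x i)).support
  refine ⟨t, inferInstance, fun i j => s (x i) j, fun j => j, fun i => ?_, fun j => ?_⟩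
  · have hi := LinearMap.congr_fun hs (x i)
    rw [LinearMap.comp_apply, Finsupp.linearCombination_apply,
      Finsupp.sum_of_support_subset (s := t) _
        (Finset.subset_biUnion_of_mem (fun i => (s (x i)).support) (Finset.mem_univ i))
        _ (by simp)] at hi
    rw [Finset.sum_coe_sort t fun j => s (x i) j • j]
    exact hi.symm
  · have := congrArg (fun m => s m (j : M)) h
    simpa [map_sum, Finsupp.finsetSum_apply] using this

section Relations

variable {ι : Type} (r : ι → R) (M : Type) [AddCommGroup M] [Module R M]

/-- The image `I M` of `M ^ ι`, where `I` is the right ideal generated by the `r i`. -/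
def idealSpan [Fintype ι] : AddSubgroup M where
  carrier := {m | ∃ x : ι → M, m = ∑ i, r i • x i}
  zero_mem' := ⟨0, by simp⟩
  add_mem' := by
    rintro _ _ ⟨x, rfl⟩ ⟨y, rfl⟩
    exact ⟨x + y, by simp [Finset.sum_add_distrib]⟩
  neg_mem' := by
    rintro _ ⟨x, rfl⟩
    exact ⟨-x, by simp⟩

/-- The character module of the right module `R / I`,
where `I` is the right ideal generated by the `r i`. -/
def QuotChar : AddSubgroup (R →+ AddCircle (1 : ℚ)) where
  carrier := {χ | ∀ i s, χ (r i * s) = 0}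
  zero_mem' := by simp
  add_mem' := by
    intro χ ψ hχ hψ i s
    simp [hχ i s, hψ i s]
  neg_mem' := by
    intro χ hχ i s
    simp [hχ i s]

instance QuotChar.instModule : Module R (QuotChar r) where
  smul a χ := ⟨χ.1.comp (AddMonoidHom.mulRight a), fun i s => by
    simpa [mul_assoc] using χ.2 i (s * a)⟩
  one_smul χ := Subtype.ext <| AddMonoidHom.ext fun s => congrArg χ.1 (mul_one s)
  mul_smul a b χ := Subtype.ext <| AddMonoidHom.ext fun s => congrArg χ.1 (mul_assoc s a b).symm
  smul_zero _ := rfl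
  smul_add _ _ _ := rfl
  add_smul a b χ := Subtype.ext <| AddMonoidHom.ext fun s =>
    (congrArg χ.1 (mul_add s a b)).trans (map_add χ.1 _ _)
  zero_smul χ := Subtype.ext <| AddMonoidHom.ext fun s =>
    (congrArg χ.1 (mul_zero s)).trans (map_zero χ.1)

lemma QuotChar.smul_apply {r : ι → R} (a : R) (χ : QuotChar r) (s : R) :
    (a • χ).1 s = χ.1 (s * a) := rfl

variable {M}

/-- A character of `M` killing `I M` gives a linear map to the character module of `R / I`. -/
def QuotChar.curry [Fintype ι] (χ : M →+ AddCircle (1 : ℚ)) (hχ : ∀ m ∈ idealSpan r M, χ m = 0) :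
    M →ₗ[R] QuotChar r where
  toFun m := ⟨χ.comp ((smulAddHom R M).flip m), fun i s => by
    classical
    refine hχ _ ⟨Pi.single i (s • m), ?_⟩
    rw [Finset.sum_eq_single i (fun j _ hj => by simp [hj]) (by simp)]
    simp [mul_smul]⟩
  map_add' m m' := Subtype.ext <| AddMonoidHom.ext fun s => by simp
  map_smul' a m := Subtype.ext <| AddMonoidHom.ext fun s => by
    simp [QuotChar.smul_apply, mul_smul]

lemma QuotChar.curry_apply [Fintype ι] (χ : M →+ AddCircle (1 : ℚ))
    (hχ : ∀ m ∈ idealSpan r M, χ m = 0)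
    (m : M) (s : R) : (QuotChar.curry r χ hχ m).1 s = χ (s • m) := rfl

/-- Evaluation at `1` turns a linear map to the character module of `R / I` into a character. -/
def QuotChar.evalOne (φ : M →ₗ[R] QuotChar r) : M →+ AddCircle (1 : ℚ) where
  toFun m := (φ m).1 1
  map_zero' := by simp
  map_add' := by simp

lemma QuotChar.evalOne_smul (φ : M →ₗ[R] QuotChar r) (s : R) (m : M) :
    QuotChar.evalOne r φ (s • m) = (φ m).1 s := by
  change (φ (s • m)).1 1 = _
  rw [map_smul, QuotChar.smul_apply, one_mul]

lemma QuotChar.evalOne_eq_zero [Fintype ι] (φ : M →ₗ[R] QuotChar r) (m : M)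
    (hm : m ∈ idealSpan r M) :
    QuotChar.evalOne r φ m = 0 := by
  obtain ⟨x, rfl⟩ := hm
  rw [map_sum]
  refine Finset.sum_eq_zero fun i _ => ?_
  rw [QuotChar.evalOne_smul]
  simpa using (φ (x i)).2 i 1

end Relations

section Exact

variable {L P M : Type} [AddCommGroup L] [Module R L] [AddCommGroup P] [Module R P]
  [AddCommGroup M] [Module R M] {f : L →ₗ[R] P} {g : P →ₗ[R] M}

lemma IsFlatMod.mem_idealSpan (hM : IsFlatMod R M) (hf : Function.Injective f)
    (hg : Function.Surjective g) (hfg : Function.Exact f g) {ι : Type} [Fintype ι] (r : ι → R)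
    (l : L) (hl : f l ∈ idealSpan r P) : l ∈ idealSpan r L := by
  obtain ⟨p, hp⟩ := hl
  have h0 : ∑ i, r i • g (p i) = 0 := by
    have := hfg.apply_apply_eq_zero l
    rw [hp] at this
    simpa using this
  obtain ⟨κ, _, a, y, hx, ha⟩ := hM ι inferInstance r _ h0
  choose q hq using fun j => hg (y j)
  have hk : ∀ i, ∃ k, f k = p i - ∑ j, a i j • q j := fun i =>
    (hfg _).1 (by simp [hq, hx])
  choose k hk using hk
  refine ⟨k, hf ?_⟩
  have h1 : ∑ i, r i • ∑ j, a i j • q j = 0 := by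
    simp_rw [Finset.smul_sum, smul_smul]
    rw [Finset.sum_comm]
    simp_rw [← Finset.sum_smul, ha]
    simp
  simp [hk, hp, smul_sub, h1]

lemma IsFlatMod.exists_extension (hM : IsFlatMod R M) (hf : Function.Injective f)
    (hg : Function.Surjective g) (hfg : Function.Exact f g) {ι : Type} [Fintype ι] (r : ι → R)
    (φ : L →ₗ[R] QuotChar r) : ∃ ψ : P →ₗ[R] QuotChar r, ψ ∘ₗ f = φ := by
  have hle : idealSpan r L ≤ (idealSpan r P).comap f.toAddMonoidHom := by
    rintro _ ⟨x, rfl⟩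
    exact ⟨fun i => f (x i), by simp⟩
  let F : L ⧸ idealSpan r L →+ P ⧸ idealSpan r P := QuotientAddGroup.map _ _ f.toAddMonoidHom hle
  have hF : Function.Injective F.toIntLinearMap := by
    refine (injective_iff_map_eq_zero F).2 fun x => ?_
    induction x using QuotientAddGroup.induction_on with | H l => ?_
    intro h
    exact (QuotientAddGroup.eq_zero_iff l).2
      (hM.mem_idealSpan hf hg hfg r l ((QuotientAddGroup.eq_zero_iff (f l)).1 h))
  let χ : CharacterModule (L ⧸ idealSpan r L) :=
    QuotientAddGroup.lift _ (QuotChar.evalOne r φ) fun m hm => QuotChar.evalOne_eq_zero r φ m hm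
  obtain ⟨χ', hχ'⟩ := CharacterModule.dual_surjective_of_injective F.toIntLinearMap hF χ
  let χ₀ : P ⧸ idealSpan r P →+ AddCircle (1 : ℚ) := χ'
  have hχ₀ : ∀ m ∈ idealSpan r P, χ₀.comp (QuotientAddGroup.mk' _) m = 0 := fun m hm =>
    (congrArg χ₀ ((QuotientAddGroup.eq_zero_iff m).2 hm)).trans (map_zero χ₀)
  refine ⟨QuotChar.curry r _ hχ₀,
    LinearMap.ext fun l => Subtype.ext <| AddMonoidHom.ext fun s => ?_⟩
  rw [LinearMap.comp_apply, QuotChar.curry_apply, ← map_smul, ← QuotChar.evalOne_smul]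
  exact DFunLike.congr_fun hχ' (QuotientAddGroup.mk (s • l))

lemma IsFlatMod.of_exists_extension (hP : IsFlatMod R P)
    (hg : Function.Surjective g) (hfg : Function.Exact f g)
    (h : ∀ (ι : Type) (_ : Fintype ι) (r : ι → R) (φ : L →ₗ[R] QuotChar r),
      ∃ ψ : P →ₗ[R] QuotChar r, ψ ∘ₗ f = φ) : IsFlatMod R M := by
  intro ι _ r x hx
  choose p hp using fun i => hg (x i)
  obtain ⟨l, hl⟩ : ∃ l, f l = ∑ i, r i • p i := (hfg _).1 (by simp [hp, hx])
  have hmem : l ∈ idealSpan r L := by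
    rw [← QuotientAddGroup.eq_zero_iff]
    refine CharacterModule.eq_zero_of_character_apply fun c => ?_
    let χ : L ⧸ idealSpan r L →+ AddCircle (1 : ℚ) := c
    have hχ : ∀ m ∈ idealSpan r L, χ.comp (QuotientAddGroup.mk' _) m = 0 := fun m hm =>
      (congrArg χ ((QuotientAddGroup.eq_zero_iff m).2 hm)).trans (map_zero χ)
    obtain ⟨ψ, hψ⟩ := h ι inferInstance r (QuotChar.curry r _ hχ)
    have h1 : (QuotChar.curry r _ hχ l).1 1 = 0 := by
      rw [← hψ]
      exact QuotChar.evalOne_eq_zero r ψ (f l) ⟨p, hl⟩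
    rw [QuotChar.curry_apply, one_smul] at h1
    exact h1
  obtain ⟨k, rfl⟩ := hmem
  have h0 : ∑ i, r i • (p i - f (k i)) = 0 := by
    simp only [map_sum, map_smul] at hl
    simp [smul_sub, hl]
  obtain ⟨κ, _, a, y, hy, ha⟩ := hP ι inferInstance r _ h0
  refine ⟨κ, inferInstance, a, fun j => g (y j), fun i => ?_, ha⟩
  have := congrArg g (hy i)
  simpa [hp, hfg.apply_apply_eq_zero] using this

lemma IsFlatMod.of_exact_s18 (hP : IsFlatMod R P) (hM : IsFlatMod R M) (hf : Function.Injective f)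
    (hg : Function.Surjective g) (hfg : Function.Exact f g) : IsFlatMod R L := by
  intro ι _ r x hx
  have hx' : ∑ i, r i • f (x i) = 0 := by
    simpa using congrArg f hx
  obtain ⟨κ, _, a, p, hp, ha⟩ := hP ι inferInstance r _ hx'
  obtain ⟨κ', _, b, y, hy, hb⟩ := hM.system Finset.univ a (fun j => g (p j)) fun i _ => by
    have := congrArg g (hp i)
    rw [hfg.apply_apply_eq_zero] at this
    simpa using this.symm
  choose q hq using fun j => hg (y j)
  have hk : ∀ j, ∃ k, f k = p j - ∑ t, b j t • q t := fun j =>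
    (hfg _).1 (by simp [hq, hy])
  choose k hk using hk
  refine ⟨κ, inferInstance, a, k, fun i => hf ?_, ha⟩
  have h1 : ∑ j, a i j • ∑ t, b j t • q t = 0 := by
    simp_rw [Finset.smul_sum, smul_smul]
    rw [Finset.sum_comm]
    simp_rw [← Finset.sum_smul, hb i (Finset.mem_univ i)]
    simp
  simp [hk, hp i, smul_sub, h1]

end Exact

end Flat

section Ext

variable {R}

lemma extVanish_succ_iff (n : ℕ) (M W : ModuleCat.{0} R) :
    extVanish R (n + 1) M W ↔ Subsingleton (Abelian.Ext M W (n + 1)) := by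
  let P : ProjectiveResolution M := projectiveResolution M
  have h1 : extVanish R (n + 1) M W ↔ ∀ φ : P.complex.X (n + 1) ⟶ W,
      P.complex.d (n + 2) (n + 1) ≫ φ = 0 →
        ∃ ψ : P.complex.X n ⟶ W, P.complex.d (n + 1) n ≫ ψ = φ := by
    rw [extVanish, ← ModuleCat.isZero_iff_subsingleton,
      (P.isoExt (R := ℤ) (n + 1) W).isZero_iff, ← HomologicalComplex.exactAt_iff_isZero_homology,
      HomologicalComplex.exactAt_iff' _ n (n + 1) (n + 2) (by simp) (by simp),
      ShortComplex.moduleCat_exact_iff]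
    rfl
  rw [h1]
  constructor
  · intro h
    refine subsingleton_of_forall_eq 0 fun e => ?_
    obtain ⟨φ, hφ, rfl⟩ := P.extMk_surjective e (n + 2) rfl
    exact (P.extMk_eq_zero_iff φ (n + 2) rfl hφ n rfl).2 (h φ hφ)
  · intro h φ hφ
    exact (P.extMk_eq_zero_iff φ (n + 2) rfl hφ n rfl).1 (Subsingleton.elim _ _)

lemma exists_projective_presentation (M : ModuleCat.{0} R) :
    ∃ (K P : ModuleCat.{0} R) (f : K ⟶ P) (g : P ⟶ M) (w : f ≫ g = 0),
      Projective P ∧ IsFlatMod R P ∧ (ShortComplex.mk f g w).ShortExact ∧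
        Function.Injective f ∧ Function.Surjective g ∧ Function.Exact f g := by
  have hS := M.shortExact_projectiveShortComplex
  exact ⟨_, _, _, _, M.projectiveShortComplex.zero, inferInstance,
    IsFlatMod.of_projective M.projectiveShortComplex.X₂, hS, hS.moduleCat_injective_f,
    hS.moduleCat_surjective_g,
    (ShortComplex.ShortExact.moduleCat_exact_iff_function_exact _).1 hS.exact⟩

lemma IsFlatMod.subsingleton_ext (n : ℕ) {M : ModuleCat.{0} R} (hM : IsFlatMod R M)
    {ι : Type} [Fintype ι] (r : ι → R) :
    Subsingleton (Abelian.Ext M (ModuleCat.of R (QuotChar r)) (n + 1)) := by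
  induction n generalizing M with
  | zero =>
    obtain ⟨K, P, f, g, w, _, hP, hS, hf, hg, hfg⟩ := exists_projective_presentation M
    refine subsingleton_of_forall_eq 0 fun e => ?_
    obtain ⟨e₁, rfl⟩ := Abelian.Ext.contravariant_sequence_exact₃ hS _ e
      (Abelian.Ext.eq_zero_of_projective _) (add_zero 1)
    obtain ⟨φ, rfl⟩ := (Abelian.Ext.mk₀_bijective _ _).2 e₁
    obtain ⟨ψ, hψ⟩ := hM.exists_extension hf hg hfg r φ.hom
    have : φ = f ≫ ModuleCat.ofHom ψ := ModuleCat.hom_ext hψ.symm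
    rw [this, ← Abelian.Ext.mk₀_comp_mk₀, hS.extClass_comp_assoc]
  | succ n ih =>
    obtain ⟨K, P, f, g, w, _, hP, hS, hf, hg, hfg⟩ := exists_projective_presentation M
    have := ih (hP.of_exact_s18 hM hf hg hfg)
    refine subsingleton_of_forall_eq 0 fun e => ?_
    obtain ⟨e₁, rfl⟩ := Abelian.Ext.contravariant_sequence_exact₃ hS _ e
      (Abelian.Ext.eq_zero_of_projective _) (show 1 + (n + 1) = n + 1 + 1 by lia)
    rw [Subsingleton.elim e₁ 0, Abelian.Ext.comp_zero]

lemma fdLE.subsingleton_ext {n : ℕ} (k : ℕ) {M : ModuleCat.{0} R} (hM : fdLE R n M)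
    {ι : Type} [Fintype ι] (r : ι → R) :
    Subsingleton (Abelian.Ext M (ModuleCat.of R (QuotChar r)) (n + k + 1)) := by
  induction n generalizing M with
  | zero => exact IsFlatMod.subsingleton_ext (0 + k) hM r
  | succ n ih =>
    obtain ⟨K, F, f, g, hF, hf, hg, hfg, hK⟩ := hM
    have w : f ≫ g = 0 := by
      ext x
      exact hfg.apply_apply_eq_zero x
    have hS : (ShortComplex.mk f g w).ShortExact :=
      { exact := (ShortComplex.ShortExact.moduleCat_exact_iff_function_exact _).2 hfg
        mono_f := (ModuleCat.mono_iff_injective _).2 hf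
        epi_g := (ModuleCat.epi_iff_surjective _).2 hg }
    have := ih hK
    have := hF.subsingleton_ext (n + 1 + k) r
    refine subsingleton_of_forall_eq 0 fun e => ?_
    obtain ⟨e₁, rfl⟩ := Abelian.Ext.contravariant_sequence_exact₃ hS _ e
      (Subsingleton.elim _ _) (show 1 + (n + k + 1) = n + 1 + k + 1 by lia)
    rw [Subsingleton.elim e₁ 0, Abelian.Ext.comp_zero]

lemma fdLE.of_subsingleton_ext {n : ℕ} {M : ModuleCat.{0} R}
    (h : ∀ (ι : Type) (_ : Fintype ι) (r : ι → R),
      Subsingleton (Abelian.Ext M (ModuleCat.of R (QuotChar r)) (n + 1))) : fdLE R n M := by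
  induction n generalizing M with
  | zero =>
    obtain ⟨K, P, f, g, w, _, hP, hS, hf, hg, hfg⟩ := exists_projective_presentation M
    refine hP.of_exists_extension hg hfg fun ι _ r φ => ?_
    have := h ι inferInstance r
    obtain ⟨e, he⟩ := Abelian.Ext.contravariant_sequence_exact₁ hS _
      (Abelian.Ext.mk₀ (Y := ModuleCat.of R (QuotChar r)) (ModuleCat.ofHom φ)) (add_zero 1)
      (Subsingleton.elim _ _)
    obtain ⟨ψ, rfl⟩ := (Abelian.Ext.mk₀_bijective _ _).2 e
    rw [Abelian.Ext.mk₀_comp_mk₀] at he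
    exact ⟨ψ.hom, congrArg ModuleCat.Hom.hom ((Abelian.Ext.mk₀_bijective _ _).1 he)⟩
  | succ n ih =>
    obtain ⟨K, P, f, g, w, _, hP, hS, hf, hg, hfg⟩ := exists_projective_presentation M
    refine ⟨K, P, f, g, hP, hf, hg, hfg, ih fun ι _ r => subsingleton_of_forall_eq 0 fun e => ?_⟩
    have := h ι inferInstance r
    obtain ⟨e₂, rfl⟩ := Abelian.Ext.contravariant_sequence_exact₁ hS _ e
      (show 1 + (n + 1) = n + 1 + 1 by lia) (Subsingleton.elim _ _)
    rw [Abelian.Ext.eq_zero_of_projective e₂, Abelian.Ext.comp_zero]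

/-- Dimension shifting along an injective coresolution of `T`. -/
lemma exists_cosyzygy (n : ℕ) (T : ModuleCat.{0} R) :
    ∃ W : ModuleCat.{0} R, ∀ (M : ModuleCat.{0} R) (k : ℕ),
      Subsingleton (Abelian.Ext M W (k + 1)) ↔ Subsingleton (Abelian.Ext M T (n + k + 1)) := by
  induction n with
  | zero => exact ⟨T, fun M k => by rw [Nat.zero_add]⟩
  | succ n ih =>
    obtain ⟨W, hW⟩ := ih
    have hS : (ShortComplex.mk (Injective.ι W) (Limits.cokernel.π (Injective.ι W))
        (by simp)).ShortExact := { exact := ShortComplex.exact_cokernel _ }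
    refine ⟨Limits.cokernel (Injective.ι W), fun M k => ?_⟩
    rw [show n + 1 + k + 1 = n + (k + 1) + 1 by lia, ← hW M (k + 1)]
    constructor
    · intro _
      refine subsingleton_of_forall_eq 0 fun e => ?_
      obtain ⟨e₃, rfl⟩ := Abelian.Ext.covariant_sequence_exact₁ M hS e
        (Abelian.Ext.eq_zero_of_injective _) rfl
      rw [Subsingleton.elim e₃ 0, Abelian.Ext.zero_comp]
    · intro _
      refine subsingleton_of_forall_eq 0 fun e => ?_
      obtain ⟨e₂, rfl⟩ := Abelian.Ext.covariant_sequence_exact₃ M hS e rfl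
        (Subsingleton.elim _ _)
      rw [Abelian.Ext.eq_zero_of_injective e₂, Abelian.Ext.zero_comp]

end Ext

/-- Every `L_n`-injective module is injective iff the weak global dimension of `R`
is at most `n`, i.e. every module has flat dimension at most `n`. -/
theorem stmt18 (n : ℕ) :
    (∀ W : ModuleCat.{0} R, LnInj R n W → Injective W) ↔
      ∀ M : ModuleCat.{0} R, fdLE R n M := by
  constructor
  · intro h M
    refine fdLE.of_subsingleton_ext fun ι _ r => ?_
    obtain ⟨W, hW⟩ := exists_cosyzygy n (ModuleCat.of R (QuotChar r))
    have hinj : Injective W := h W fun M hM =>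
      (extVanish_succ_iff 0 M W).2 ((hW M 0).2 (hM.subsingleton_ext 0 r))
    exact (hW M 0).1 (Abelian.Ext.subsingleton_of_injective M W 0)
  · intro h W hW
    exact injective_iff_subsingleton_ext_one.2 fun M =>
      (extVanish_succ_iff 0 M W).1 (hW M (h M))
end
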